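/- Analytic core of the comparison lemma for restrictions (Lemma 3.3 of the paper): fix α > 0 and a sequence (p_n) of even positive integers with p_n ∼ 2α√(2n) as n → ∞. For every η > 0, every ε ∈ (0, 1/3) and every δ ∈ (0, ε) there exist n₀ ∈ ℕ and ζ > 0 such that the following holds for all n ≥ n₀. Let a, p_r, p_l, p_in, n′, p′ be positive integers satisfying: ⌊(1/3 − ε) p_n⌋ ≤ p_r ≤ (1/3 − δ) p_n; p_n/2 ≤ p_l ≤ (2/3 − δ) p_n; n/2 ≤ a ≤ (1 − δ) n; 1 ≤ p_in ≤ √n / δ; |n′/n − 1| ≤ ζ; |p′/p_n − 1| ≤ ζ with p′ even; and P := p_r + p_l + p_in even. Then all the Q-arguments below are well defined (in particular n − a ≥ 1, n′ − a ≥ 1, p_n − P + 2 p_in ≥ 2 and p′ − P + 2 p_in ≥ 2) and | [ Q(n − a, (p_n − P + 2 p_in)/2) / ( (n + p_n/2 + 1) · Q(n, p_n/2) ) ] · [ (n′ + p′/2 + 1) · Q(n′, p′/2) / Q(n′ − a, (p′ − P + 2 p_in)/2) ] − 1 | ≤ η. -/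

import Mathlib

/-!
In the regime `ℓ² ≍ m → ∞`, Stirling's formula gives
`Q(m, ℓ) ~ C · 12^m (9/2)^ℓ ℓ^(1/2) m^(-5/2) exp (-9ℓ²/(4m))` (`tendsto_logRem`). Apart from the
exponential factor `12^m (9/2)^ℓ`, the right-hand side is insensitive to multiplying `m` and `ℓ` by
factors close to `1`; this is made uniform in `log_Qcount_compare`.

In the quotient to be estimated, the pair `(n - a, ℓ₁)` is compared with `(n' - a, ℓ₁')` and
`(n, pₙ/2)` with `(n', p'/2)`. Both comparisons involve the same differences `n - n'` and
`(pₙ - p')/2`, so the exponential factors cancel exactly. The goodness conditions give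
`n - a ≥ δ n` and `ℓ₁ ≥ δ pₙ`, so that closeness of `n'/n` and `p'/pₙ` to `1` passes to the
restricted parameters, with a loss of a factor `1/δ`.
-/

open Filter Topology

/-- The Bouttier–Guitter counting formula: `Qcount m ℓ` is the number of rooted
quadrangulations with a simple boundary having `m` inner faces and perimeter `2ℓ`
(for `m ≥ 1`, `ℓ ≥ 1` and `m - ℓ + 1 ≥ 0`; note that the natural subtraction
`m + 1 - ℓ` then agrees with `m - ℓ + 1`). -/
noncomputable def Qcount (m ℓ : ℕ) : ℝ :=
  (3:ℝ) ^ (-(ℓ:ℤ)) * (Nat.factorial (3*ℓ)) / ((Nat.factorial ℓ) * (Nat.factorial (2*ℓ - 1)))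
    * (3:ℝ) ^ m * (Nat.factorial (2*m + ℓ - 1))
    / ((Nat.factorial (m + 1 - ℓ)) * (Nat.factorial (m + 2*ℓ)))

/-- The error term in Stirling's formula for `log k!`. -/
noncomputable def stirlingErr (k : ℕ) : ℝ :=
  Real.log (Nat.factorial k) - (k * Real.log k - k + Real.log k / 2)

lemma tendsto_stirlingErr :
    Tendsto stirlingErr atTop (𝓝 (Real.log (2 * Real.pi) / 2)) := by
  have h := Stirling.tendsto_stirlingSeq_sqrt_pi
  have h2 := (Real.continuousAt_log (Real.sqrt_pos.2 Real.pi_pos).ne').tendsto.comp h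
  have h3 := h2.add_const (Real.log 2 / 2)
  have e : Real.log (√Real.pi) + Real.log 2 / 2 = Real.log (2 * Real.pi) / 2 := by
    rw [Real.log_sqrt Real.pi_pos.le, Real.log_mul (by norm_num) Real.pi_pos.ne']; ring
  rw [e] at h3
  refine h3.congr' ?_
  filter_upwards [eventually_gt_atTop 0] with k hk
  have hk' : (0:ℝ) < k := by exact_mod_cast hk
  have := Stirling.log_stirlingSeq_formula k
  simp only [Function.comp_apply, this, stirlingErr]
  rw [Real.log_mul (by norm_num) hk'.ne', Real.log_div hk'.ne' (Real.exp_pos 1).ne', Real.log_exp]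
  ring

lemma log_one_add_expansion {u : ℝ} (hu : |u| ≤ 1 / 2) :
    |Real.log (1 + u) - (u - u ^ 2 / 2)| ≤ 2 * |u| ^ 3 := by
  have h := Real.abs_log_sub_add_sum_range_le (x := -u) (by rw [abs_neg]; linarith) 2
  simp only [Finset.sum_range_succ, Finset.sum_range_zero, abs_neg] at h
  norm_num at h
  have e : Real.log (1 + u) - (u - u ^ 2 / 2) = -u + u ^ 2 / 2 + Real.log (1 + u) := by ring
  rw [e]
  refine h.trans ?_
  rw [div_le_iff₀ (by linarith)]
  nlinarith [pow_nonneg (abs_nonneg u) 3]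

/-- With `t = ℓ/m`, this is the exponential rate left by Stirling's formula for
`(2m+ℓ)! / ((m-ℓ)! (m+2ℓ)!)`. The linear terms at `t = 0` cancel, and the quadratic one produces
the Gaussian factor `exp (-9ℓ²/(4m))`. -/
lemma entropy_expansion {t : ℝ} (h0 : 0 ≤ t) (h1 : t ≤ 1 / 4) :
    |(2 + t) * Real.log (1 + t / 2) - (1 - t) * Real.log (1 - t)
      - (1 + 2 * t) * Real.log (1 + 2 * t) + 9 / 4 * t ^ 2| ≤ 40 * t ^ 3 := by
  have a := log_one_add_expansion (u := t / 2) (by rw [abs_of_nonneg (by linarith)]; linarith)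
  have b := log_one_add_expansion (u := -t) (by rw [abs_neg, abs_of_nonneg h0]; linarith)
  have c := log_one_add_expansion (u := 2 * t) (by rw [abs_of_nonneg (by linarith)]; linarith)
  rw [abs_of_nonneg (by linarith : 0 ≤ t / 2)] at a
  rw [abs_neg, abs_of_nonneg h0, ← sub_eq_add_neg] at b
  rw [abs_of_nonneg (by linarith : 0 ≤ 2 * t)] at c
  set A := Real.log (1 + t / 2) - (t / 2 - (t / 2) ^ 2 / 2) with hA
  set B := Real.log (1 - t) - (-t - (-t) ^ 2 / 2) with hB
  set C := Real.log (1 + 2 * t) - (2 * t - (2 * t) ^ 2 / 2) with hC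
  have e : (2 + t) * Real.log (1 + t / 2) - (1 - t) * Real.log (1 - t)
      - (1 + 2 * t) * Real.log (1 + 2 * t) + 9 / 4 * t ^ 2
      = (2 + t) * A - (1 - t) * B - (1 + 2 * t) * C + (27 / 8) * t ^ 3 := by
    rw [hA, hB, hC]; ring
  have ht3 : 0 ≤ t ^ 3 := pow_nonneg h0 3
  have a' : |(2 + t) * A| ≤ (9 / 4) * (2 * (t / 2) ^ 3) := by
    rw [abs_mul, abs_of_nonneg (by linarith : 0 ≤ 2 + t)]
    exact mul_le_mul (by linarith) a (abs_nonneg _) (by norm_num)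
  have b' : |(1 - t) * B| ≤ 1 * (2 * t ^ 3) := by
    rw [abs_mul, abs_of_nonneg (by linarith : 0 ≤ 1 - t)]
    exact mul_le_mul (by linarith) b (abs_nonneg _) (by norm_num)
  have c' : |(1 + 2 * t) * C| ≤ (3 / 2) * (2 * (2 * t) ^ 3) := by
    rw [abs_mul, abs_of_nonneg (by linarith : 0 ≤ 1 + 2 * t)]
    exact mul_le_mul (by linarith) c (abs_nonneg _) (by norm_num)
  rw [e]
  rw [abs_le] at *
  constructor <;> nlinarith

/-- The factors of the factorials with shifted arguments are pulled out so that Stirling's formula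
applies at linear functions of `m` and `ℓ`. -/
lemma Qcount_eq {m ℓ : ℕ} (hℓ : 0 < ℓ) (h : ℓ < m) :
    0 < Qcount m ℓ ∧ Real.log (Qcount m ℓ) =
      ((m : ℝ) - ℓ) * Real.log 3 + Real.log (Nat.factorial (3 * ℓ)) + Real.log (2 * ℓ)
      - Real.log (Nat.factorial ℓ) - Real.log (Nat.factorial (2 * ℓ))
      + Real.log (Nat.factorial (2 * m + ℓ)) - Real.log (2 * m + ℓ) - Real.log ((m : ℝ) - ℓ + 1)
      - Real.log (Nat.factorial (m - ℓ)) - Real.log (Nat.factorial (m + 2 * ℓ)) := by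
  have f : ∀ k, (0:ℝ) < Nat.factorial k := fun k => by exact_mod_cast Nat.factorial_pos k
  have hl : (0:ℝ) < ℓ := by exact_mod_cast hℓ
  have hm : (ℓ:ℝ) < m := by exact_mod_cast h
  have e1 : ((Nat.factorial (2 * ℓ) : ℕ) : ℝ) = (2 * ℓ) * (Nat.factorial (2 * ℓ - 1)) := by
    rw [← Nat.mul_factorial_pred (by omega : 2 * ℓ ≠ 0)]; push_cast; ring
  have e2 : ((Nat.factorial (2 * m + ℓ) : ℕ) : ℝ)
      = (2 * m + ℓ) * (Nat.factorial (2 * m + ℓ - 1)) := by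
    rw [← Nat.mul_factorial_pred (by omega : 2 * m + ℓ ≠ 0)]; push_cast; ring
  have e3 : ((Nat.factorial (m + 1 - ℓ) : ℕ) : ℝ) = ((m : ℝ) - ℓ + 1) * (Nat.factorial (m - ℓ)) := by
    rw [show m + 1 - ℓ = (m - ℓ) + 1 by omega, Nat.factorial_succ]
    push_cast [Nat.cast_sub h.le]; ring
  have p3 : (0:ℝ) < (m : ℝ) - ℓ + 1 := by linarith
  have p2 : (0:ℝ) < 2 * m + ℓ := by linarith
  have hz : (0:ℝ) < (3:ℝ) ^ (-(ℓ:ℤ)) := by positivity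
  have hpos : 0 < Qcount m ℓ := by
    have := f (3 * ℓ); have := f ℓ; have := f (2 * ℓ - 1); have := f (2 * m + ℓ - 1)
    have := f (m + 1 - ℓ); have := f (m + 2 * ℓ)
    unfold Qcount; positivity
  refine ⟨hpos, ?_⟩
  have g := fun k => (f k).ne'
  unfold Qcount
  rw [e1, e2, e3, Real.log_mul (by positivity) (g _), Real.log_mul p2.ne' (g _)]
  rw [Real.log_div, Real.log_mul, Real.log_mul, Real.log_div, Real.log_mul, Real.log_mul,
    Real.log_mul, Real.log_mul, Real.log_zpow, Real.log_pow]
  · push_cast; ring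
  all_goals first
    | exact g _
    | exact p3.ne'
    | simp [g, p3.ne']

/-- The logarithm of `Qcount m ℓ` minus that of `12^m (9/2)^ℓ ℓ^(1/2) m^(-5/2) exp (-9ℓ²/(4m))`. -/
noncomputable def logRem (m ℓ : ℕ) : ℝ :=
  Real.log (Qcount m ℓ) - m * Real.log 12 - ℓ * Real.log (9 / 2)
    - (Real.log ℓ / 2 - 5 / 2 * Real.log m - 9 / 4 * ((ℓ:ℝ) ^ 2 / m))

/-- Exact form of the remainder: Stirling errors, `m` times the entropy remainder at `t = ℓ/m`, and
terms continuous at `t = 0`. -/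
lemma logRem_eq {m ℓ : ℕ} (hℓ : 0 < ℓ) (h : ℓ < m) :
    logRem m ℓ =
      stirlingErr (3 * ℓ) - stirlingErr ℓ - stirlingErr (2 * ℓ)
      + stirlingErr (2 * m + ℓ) - stirlingErr (m - ℓ) - stirlingErr (m + 2 * ℓ)
      + m * ((2 + (ℓ:ℝ) / m) * Real.log (1 + (ℓ:ℝ) / m / 2)
          - (1 - (ℓ:ℝ) / m) * Real.log (1 - (ℓ:ℝ) / m)
          - (1 + 2 * ((ℓ:ℝ) / m)) * Real.log (1 + 2 * ((ℓ:ℝ) / m)) + 9 / 4 * ((ℓ:ℝ) / m) ^ 2)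
      + (Real.log 3 / 2 - Real.log (1 + (ℓ:ℝ) / m / 2) / 2 - Real.log (1 - (ℓ:ℝ) / m) / 2
        - Real.log (1 + 2 * ((ℓ:ℝ) / m)) / 2 - Real.log (1 - (ℓ:ℝ) / m + 1 / m)) := by
  have hl : (0:ℝ) < ℓ := by exact_mod_cast hℓ
  have hm : (ℓ:ℝ) < m := by exact_mod_cast h
  have hm0 : (0:ℝ) < m := hl.trans hm
  obtain ⟨-, hQ⟩ := Qcount_eq hℓ h
  unfold logRem stirlingErr
  rw [hQ]
  push_cast [Nat.cast_sub h.le]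
  have ht : (ℓ:ℝ) / m < 1 := (div_lt_one hm0).2 hm
  have ht0 : 0 < (ℓ:ℝ) / m := by positivity
  have hlt : (ℓ:ℝ) = m * (ℓ / m) := by field_simp
  have hmi : (0:ℝ) < 1 / m := by positivity
  set t := (ℓ:ℝ) / m with htdef
  have l1 : Real.log (2 * m + ℓ) = Real.log 2 + Real.log m + Real.log (1 + t / 2) := by
    rw [← Real.log_mul (by norm_num) hm0.ne', ← Real.log_mul (by positivity) (by positivity)]
    congr 1; rw [hlt]; ring
  have l2 : Real.log ((m:ℝ) - ℓ) = Real.log m + Real.log (1 - t) := by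
    rw [← Real.log_mul hm0.ne' (by linarith)]
    congr 1; rw [hlt]; ring
  have l3 : Real.log ((m:ℝ) + 2 * ℓ) = Real.log m + Real.log (1 + 2 * t) := by
    rw [← Real.log_mul hm0.ne' (by positivity)]
    congr 1; rw [hlt]; ring
  have l4 : Real.log ((m:ℝ) - ℓ + 1) = Real.log m + Real.log (1 - t + 1 / m) := by
    rw [← Real.log_mul hm0.ne' (by linarith)]
    congr 1; rw [htdef]; field_simp
  have l5 : Real.log (3 * ℓ) = Real.log 3 + Real.log ℓ := Real.log_mul (by norm_num) hl.ne'
  have l6 : Real.log (2 * ℓ) = Real.log 2 + Real.log ℓ := Real.log_mul (by norm_num) hl.ne'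
  have l7 : Real.log 12 = Real.log 3 + 2 * Real.log 2 := by
    rw [show (12:ℝ) = 3 * 2 ^ 2 by norm_num, Real.log_mul (by norm_num) (by norm_num), Real.log_pow]
    norm_num
  have l8 : Real.log (9 / 2) = 2 * Real.log 3 - Real.log 2 := by
    rw [show (9:ℝ) / 2 = 3 ^ 2 / 2 by norm_num, Real.log_div (by norm_num) (by norm_num),
      Real.log_pow]
    norm_num
  rw [l1, l2, l3, l4, l5, l6, l7, l8]
  have hsq : (ℓ:ℝ) ^ 2 / m = m * t ^ 2 := by rw [htdef]; field_simp
  rw [hsq]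
  generalize Real.log (1 + t / 2) = X1
  generalize Real.log (1 - t) = X2
  generalize Real.log (1 + 2 * t) = X3
  generalize Real.log (1 - t + 1 / m) = X4
  generalize Real.log (ℓ:ℝ) = X5
  rw [hlt]
  ring

/-- Sharp asymptotics of `Qcount m ℓ` as `m → ∞` with `ℓ² ≍ m`. -/
lemma tendsto_logRem {ι : Type*} {L : Filter ι} {m ℓ : ι → ℕ} {c₁ c₂ : ℝ} (hc₁ : 0 < c₁)
    (hm : Tendsto m L atTop) (h₁ : ∀ᶠ i in L, c₁ * m i ≤ (ℓ i : ℝ) ^ 2)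
    (h₂ : ∀ᶠ i in L, (ℓ i : ℝ) ^ 2 ≤ c₂ * m i) :
    Tendsto (fun i => logRem (m i) (ℓ i)) L
      (𝓝 (Real.log 3 / 2 - Real.log (2 * Real.pi))) := by
  have hmR : Tendsto (fun i => (m i : ℝ)) L atTop := tendsto_natCast_atTop_atTop.comp hm
  have hminv : Tendsto (fun i => 1 / (m i : ℝ)) L (𝓝 0) := by
    simp only [one_div]
    exact tendsto_inv_atTop_zero.comp hmR
  have hℓR : Tendsto (fun i => (ℓ i : ℝ)) L atTop := by
    have h : Tendsto (fun i => (ℓ i : ℝ) ^ 2) L atTop :=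
      tendsto_atTop_mono' L h₁ (hmR.const_mul_atTop hc₁)
    refine (Real.tendsto_sqrt_atTop.comp h).congr fun i => ?_
    simp [Real.sqrt_sq]
  have hℓ : Tendsto ℓ L atTop := tendsto_natCast_atTop_iff.1 hℓR
  have ht : Tendsto (fun i => (ℓ i : ℝ) / m i) L (𝓝 0) := by
    have h : Tendsto (fun i => ((ℓ i : ℝ) / m i) ^ 2) L (𝓝 0) := by
      refine squeeze_zero' (Eventually.of_forall fun i => sq_nonneg _) ?_
        (by simpa using hminv.const_mul c₂)
      filter_upwards [h₂, hmR.eventually_gt_atTop 0] with i hi hi0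
      rw [div_pow, div_le_iff₀ (by positivity)]
      calc _ ≤ _ := hi
        _ = _ := by field_simp
    have := (Real.continuous_sqrt.tendsto 0).comp h
    rw [Real.sqrt_zero] at this
    refine this.congr fun i => ?_
    simp only [Function.comp_apply]
    rw [Real.sqrt_sq (by positivity)]
  have hlt : ∀ᶠ i in L, ℓ i < m i := by
    filter_upwards [ht.eventually_lt_const zero_lt_one, hmR.eventually_gt_atTop 0] with i hi hi0
    rw [div_lt_one hi0] at hi
    exact_mod_cast hi
  have ev : ∀ᶠ i in L, 0 < ℓ i ∧ ℓ i < m i := (hℓ.eventually_gt_atTop 0).and hlt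
  refine Tendsto.congr' (ev.mono fun i hi => (logRem_eq hi.1 hi.2).symm) ?_
  have a1 : Tendsto (fun i => 3 * ℓ i) L atTop :=
    tendsto_atTop_mono (fun i => by omega) hℓ
  have a2 : Tendsto (fun i => 2 * ℓ i) L atTop :=
    tendsto_atTop_mono (fun i => by omega) hℓ
  have a3 : Tendsto (fun i => 2 * m i + ℓ i) L atTop :=
    tendsto_atTop_mono (fun i => by omega) hm
  have a5 : Tendsto (fun i => m i + 2 * ℓ i) L atTop :=
    tendsto_atTop_mono (fun i => by omega) hm
  have a4 : Tendsto (fun i => m i - ℓ i) L atTop := by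
    refine tendsto_natCast_atTop_iff (R := ℝ).1 ?_
    refine tendsto_atTop_mono' L ?_ (hmR.const_mul_atTop (by norm_num : (0:ℝ) < 1 / 2))
    filter_upwards [ht.eventually_lt_const (by norm_num : (0:ℝ) < 1 / 2), hlt,
      hmR.eventually_gt_atTop 0] with i hi hi1 hi0
    rw [div_lt_iff₀ hi0] at hi
    rw [Nat.cast_sub hi1.le]
    linarith
  have s := tendsto_stirlingErr
  -- the entropy term is at most `40 * (ℓ²/m) * (ℓ/m)`
  have hE : Tendsto (fun i => (m i : ℝ) * ((2 + (ℓ i:ℝ) / m i) * Real.log (1 + (ℓ i:ℝ) / m i / 2)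
          - (1 - (ℓ i:ℝ) / m i) * Real.log (1 - (ℓ i:ℝ) / m i)
          - (1 + 2 * ((ℓ i:ℝ) / m i)) * Real.log (1 + 2 * ((ℓ i:ℝ) / m i))
          + 9 / 4 * ((ℓ i:ℝ) / m i) ^ 2)) L (𝓝 0) := by
    refine squeeze_zero_norm' ?_ (by simpa using ht.const_mul (40 * c₂))
    filter_upwards [h₂, ht.eventually_lt_const (by norm_num : (0:ℝ) < 1 / 4),
      hmR.eventually_gt_atTop 0] with i hi hi1 hi0
    rw [Real.norm_eq_abs, abs_mul, abs_of_pos hi0]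
    have ht0 : 0 ≤ (ℓ i : ℝ) / m i := by positivity
    refine (mul_le_mul_of_nonneg_left (entropy_expansion ht0 hi1.le) hi0.le).trans ?_
    have e : (m i : ℝ) * (40 * ((ℓ i : ℝ) / m i) ^ 3)
        = 40 * ((ℓ i : ℝ) ^ 2 / m i) * ((ℓ i : ℝ) / m i) := by field_simp
    rw [e]
    refine mul_le_mul_of_nonneg_right ?_ ht0
    have := (div_le_iff₀ hi0).2 hi
    linarith
  have lg : ∀ {f : ι → ℝ}, Tendsto f L (𝓝 1) → Tendsto (fun i => Real.log (f i)) L (𝓝 0) := by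
    intro f hf
    simpa using hf.log one_ne_zero
  have b1 := lg (f := fun i => 1 + (ℓ i:ℝ) / m i / 2) (by simpa using (ht.div_const 2).const_add 1)
  have b2 := lg (f := fun i => 1 - (ℓ i:ℝ) / m i) (by simpa using ht.const_sub 1)
  have b3 := lg (f := fun i => 1 + 2 * ((ℓ i:ℝ) / m i))
    (by simpa using (ht.const_mul 2).const_add 1)
  have b4 := lg (f := fun i => 1 - (ℓ i:ℝ) / m i + 1 / m i)
    (by simpa using (ht.const_sub 1).add hminv)
  have main := (((((((s.comp a1).sub (s.comp hℓ)).sub (s.comp a2)).add (s.comp a3)).sub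
    (s.comp a4)).sub (s.comp a5)).add hE).add
    (((((b1.div_const 2).const_sub (Real.log 3 / 2)).sub (b2.div_const 2)).sub
      (b3.div_const 2)).sub b4)
  have e : Real.log (2 * Real.pi) / 2 - Real.log (2 * Real.pi) / 2 - Real.log (2 * Real.pi) / 2
      + Real.log (2 * Real.pi) / 2 - Real.log (2 * Real.pi) / 2 - Real.log (2 * Real.pi) / 2 + 0
      + (Real.log 3 / 2 - 0 / 2 - 0 / 2 - 0 / 2 - 0)
      = Real.log 3 / 2 - Real.log (2 * Real.pi) := by ring
  rw [← e]
  exact main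

/-- `log Qcount` is, up to its linear part `m log 12 + ℓ log (9/2)`, asymptotically invariant under
perturbing `m` and `ℓ` by factors close to `1`, uniformly in the regime `ℓ² ≍ m`. -/
lemma log_Qcount_compare {c₁ c₂ θ : ℝ} (hc₁ : 0 < c₁) (hθ : 0 < θ) :
    ∃ M : ℕ, ∃ ζ : ℝ, 0 < ζ ∧ ∀ m ℓ m' ℓ' : ℕ, M ≤ m →
      c₁ * m ≤ (ℓ:ℝ) ^ 2 → (ℓ:ℝ) ^ 2 ≤ c₂ * m →
      |(m':ℝ) / m - 1| ≤ ζ → |(ℓ':ℝ) / ℓ - 1| ≤ ζ →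
      0 < Qcount m ℓ ∧ 0 < Qcount m' ℓ' ∧
      |Real.log (Qcount m ℓ) - Real.log (Qcount m' ℓ')
        - ((m:ℝ) - m') * Real.log 12 - ((ℓ:ℝ) - ℓ') * Real.log (9 / 2)| ≤ θ := by
  -- Counterexamples for `M = k`, `ζ = 1/(k+1)` would form sequences to which the asymptotics apply.
  by_contra! hcon
  have hz : ∀ k : ℕ, (0:ℝ) < 1 / ((k:ℝ) + 1) := fun k => by positivity
  choose m ℓ m' ℓ' hM h₁ h₂ hm' hℓ' hbad using fun k : ℕ => hcon k (1 / ((k:ℝ) + 1)) (hz k)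
  have hm : Tendsto m atTop atTop := tendsto_atTop_mono hM tendsto_id
  have hmR : Tendsto (fun i => (m i : ℝ)) atTop atTop := tendsto_natCast_atTop_atTop.comp hm
  have rat : ∀ {f : ℕ → ℝ}, (∀ k : ℕ, |f k - 1| ≤ 1 / ((k:ℝ) + 1)) → Tendsto f atTop (𝓝 1) := by
    intro f hf
    rw [tendsto_iff_norm_sub_tendsto_zero]
    exact squeeze_zero (fun _ => norm_nonneg _) hf tendsto_one_div_add_atTop_nhds_zero_nat
  have rm := rat hm'
  have rl := rat hℓ'
  have hℓpos : ∀ᶠ k in atTop, 0 < (ℓ k : ℝ) := by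
    filter_upwards [hmR.eventually_gt_atTop 0] with k hk
    have : 0 < (ℓ k : ℝ) ^ 2 := (mul_pos hc₁ hk).trans_le (h₁ k)
    exact lt_of_le_of_ne (Nat.cast_nonneg _) (fun h => by rw [← h] at this; norm_num at this)
  have hmm : Tendsto m' atTop atTop := by
    refine tendsto_natCast_atTop_iff (R := ℝ).1 ?_
    refine (rm.pos_mul_atTop one_pos hmR).congr' ?_
    filter_upwards [hmR.eventually_gt_atTop 0] with k hk
    field_simp
  -- the factor by which `ℓ²/m` changes tends to `1`
  have rq : Tendsto (fun k => ((ℓ' k : ℝ) / ℓ k) ^ 2 / ((m' k : ℝ) / m k)) atTop (𝓝 1) := by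
    have h := (rl.pow 2).div rm one_ne_zero
    rw [one_pow, div_one] at h
    exact h
  have hmR' : Tendsto (fun i => (m' i : ℝ)) atTop atTop := tendsto_natCast_atTop_atTop.comp hmm
  have key : ∀ᶠ k in atTop, (ℓ' k : ℝ) ^ 2 / m' k
      = (ℓ k : ℝ) ^ 2 / m k * (((ℓ' k : ℝ) / ℓ k) ^ 2 / ((m' k : ℝ) / m k)) := by
    filter_upwards [hmR.eventually_gt_atTop 0, hmR'.eventually_gt_atTop 0, hℓpos] with k h1 h2 h3
    field_simp
  have h₁' : ∀ᶠ k in atTop, c₁ / 2 * m' k ≤ (ℓ' k : ℝ) ^ 2 := by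
    filter_upwards [hmR.eventually_gt_atTop 0, hmR'.eventually_gt_atTop 0, key,
      rq.eventually_const_lt (by norm_num : (1:ℝ) / 2 < 1)] with k h1 h2 h3 h4
    rw [← le_div_iff₀ h2, h3]
    have := (le_div_iff₀ h1).2 (h₁ k)
    nlinarith
  have h₂' : ∀ᶠ k in atTop, (ℓ' k : ℝ) ^ 2 ≤ c₂ * 2 * m' k := by
    filter_upwards [hmR.eventually_gt_atTop 0, hmR'.eventually_gt_atTop 0, key,
      rq.eventually_lt_const (by norm_num : (1:ℝ) < 2), rq.eventually_const_lt one_pos]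
      with k h1 h2 h3 h4 h5
    rw [← div_le_iff₀ h2, h3]
    have := (div_le_iff₀ h1).2 (h₂ k)
    have h0 : 0 ≤ (ℓ k : ℝ) ^ 2 / m k := by positivity
    exact mul_le_mul this h4.le h5.le (h0.trans this)
  have A := tendsto_logRem hc₁ hm (Eventually.of_forall h₁) (Eventually.of_forall h₂)
  have A' := tendsto_logRem (by positivity) hmm h₁' h₂'
  have lm : Tendsto (fun k => Real.log ((m' k : ℝ) / m k)) atTop (𝓝 0) := by
    simpa using rm.log one_ne_zero
  have ll : Tendsto (fun k => Real.log ((ℓ' k : ℝ) / ℓ k)) atTop (𝓝 0) := by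
    simpa using rl.log one_ne_zero
  have lq : Tendsto (fun k => (ℓ k : ℝ) ^ 2 / m k *
      (((ℓ' k : ℝ) / ℓ k) ^ 2 / ((m' k : ℝ) / m k) - 1)) atTop (𝓝 0) := by
    have h0 : Tendsto (fun k => c₂ * |((ℓ' k : ℝ) / ℓ k) ^ 2 / ((m' k : ℝ) / m k) - 1|)
        atTop (𝓝 0) := by
      simpa using ((rq.sub_const 1).abs).const_mul c₂
    refine squeeze_zero_norm' ?_ h0
    filter_upwards [hmR.eventually_gt_atTop 0] with k h1
    rw [Real.norm_eq_abs, abs_mul, abs_of_nonneg (by positivity : 0 ≤ (ℓ k : ℝ) ^ 2 / m k)]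
    exact mul_le_mul_of_nonneg_right ((div_le_iff₀ h1).2 (h₂ k)) (abs_nonneg _)
  have T : Tendsto (fun k => Real.log (Qcount (m k) (ℓ k)) - Real.log (Qcount (m' k) (ℓ' k))
        - ((m k:ℝ) - m' k) * Real.log 12 - ((ℓ k:ℝ) - ℓ' k) * Real.log (9 / 2)) atTop (𝓝 0) := by
    have T0 := ((((A.sub A').sub (ll.div_const 2)).add (lm.const_mul (5 / 2))).add
      (lq.const_mul (9 / 4)))
    simp only [sub_self, zero_div, mul_zero, add_zero] at T0
    refine T0.congr' ?_
    filter_upwards [hmR.eventually_gt_atTop 0, hmR'.eventually_gt_atTop 0, key, hℓpos,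
      rl.eventually_const_lt one_pos] with k h1 h2 h3 h4 h5
    have h6 : (0:ℝ) < ℓ' k := by
      rcases (Nat.cast_nonneg (α := ℝ) (ℓ' k)).eq_or_lt with h | h
      · rw [← h] at h5; simp at h5
      · exact h
    rw [Real.log_div h2.ne' h1.ne', Real.log_div h6.ne' h4.ne',
      mul_sub ((ℓ k : ℝ) ^ 2 / m k), ← h3]
    unfold logRem
    ring
  have small : ∀ {m ℓ : ℕ → ℕ} {c₁ c₂ : ℝ}, 0 < c₁ → Tendsto m atTop atTop →
      (∀ᶠ k in atTop, c₁ * m k ≤ (ℓ k : ℝ) ^ 2) → (∀ᶠ k in atTop, (ℓ k : ℝ) ^ 2 ≤ c₂ * m k) →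
      ∀ᶠ k in atTop, 0 < Qcount (m k) (ℓ k) := by
    intro m ℓ c₁ c₂ hc hm h1 h2
    have hmR : Tendsto (fun i => (m i : ℝ)) atTop atTop := tendsto_natCast_atTop_atTop.comp hm
    filter_upwards [h1, h2, hmR.eventually_gt_atTop 0, hmR.eventually_gt_atTop c₂] with k h1 h2 h3 h4
    have h5 : 0 < (ℓ k : ℝ) ^ 2 := (mul_pos hc h3).trans_le h1
    have h6 : 0 < ℓ k := Nat.pos_of_ne_zero fun h => by rw [h] at h5; norm_num at h5
    have h7 : (ℓ k : ℝ) < m k := by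
      refine lt_of_pow_lt_pow_left₀ 2 h3.le (h2.trans_lt ?_)
      rw [sq]; exact mul_lt_mul_of_pos_right h4 h3
    exact (Qcount_eq h6 (by exact_mod_cast h7)).1
  have q := small hc₁ hm (Eventually.of_forall h₁) (Eventually.of_forall h₂)
  have q' := small (by positivity) hmm h₁' h₂'
  have T' := T.abs
  rw [abs_zero] at T'
  obtain ⟨k, k1, k2, k3⟩ := (q.and (q'.and (T'.eventually_lt_const hθ))).exists
  exact absurd (hbad k k1 k2) (not_lt.2 k3.le)

lemma perimeter_sq_bounds {α : ℝ} (hα : 0 < α) {p : ℕ → ℕ}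
    (hp : Tendsto (fun n => (p n : ℝ) / (2 * α * Real.sqrt (2 * n))) atTop (𝓝 1)) :
    ∀ᶠ n : ℕ in atTop,
      2 * α ^ 2 * n ≤ (p n : ℝ) ^ 2 ∧ (p n : ℝ) ^ 2 ≤ 32 * α ^ 2 * n := by
  filter_upwards [eventually_gt_atTop 0, hp.eventually_const_lt (by norm_num : (1:ℝ) / 2 < 1),
    hp.eventually_lt_const (by norm_num : (1:ℝ) < 2)] with n h0 h3 h4
  have hn : (0:ℝ) < n := by exact_mod_cast h0
  have hs : 0 < √(2 * (n:ℝ)) := Real.sqrt_pos.2 (by positivity)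
  have hsq : √(2 * (n:ℝ)) ^ 2 = 2 * n := Real.sq_sqrt (by positivity)
  rw [lt_div_iff₀ (by positivity)] at h3
  rw [div_lt_iff₀ (by positivity)] at h4
  constructor
  · calc 2 * α ^ 2 * (n:ℝ) = α ^ 2 * √(2 * (n:ℝ)) ^ 2 := by rw [hsq]; ring
      _ = (1 / 2 * (2 * α * √(2 * (n:ℝ)))) ^ 2 := by ring
      _ ≤ _ := pow_le_pow_left₀ (by positivity) h3.le 2
  · calc _ ≤ _ := pow_le_pow_left₀ (by positivity) h4.le 2
      _ = 16 * α ^ 2 * √(2 * (n:ℝ)) ^ 2 := by ring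
      _ = _ := by rw [hsq]; ring

lemma abs_log_sub_log_le {x y ζ : ℝ} (hx : 0 < x) (hy : 0 < y) (hζ : 0 ≤ ζ) (hζ' : ζ ≤ 1 / 2)
    (h : |y - x| ≤ ζ * x) : |Real.log y - Real.log x| ≤ 2 * ζ := by
  rw [← Real.log_div hy.ne' hx.ne']
  rw [abs_le] at h
  have hlo : 1 - ζ ≤ y / x := by rw [le_div_iff₀ hx]; linarith
  have hhi : y / x ≤ 1 + ζ := by rw [div_le_iff₀ hx]; linarith
  have r0 : 0 < y / x := div_pos hy hx
  have u1 := Real.log_le_sub_one_of_pos r0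
  have u2 := Real.one_sub_inv_le_log_of_pos r0
  have u3 : (y / x)⁻¹ ≤ 1 + 2 * ζ := by
    rw [inv_le_iff_one_le_mul₀ r0]
    nlinarith
  rw [abs_le]
  constructor <;> linarith

set_option maxHeartbeats 1000000 in
/-- Analytic core of the comparison lemma for restrictions (Lemma 3.3): for a
`(n,δ)`-good restriction map with area `a`, right/left/inner boundary lengths
`pr`, `pl`, `pin`, the probability of observing it as the restriction of a uniform
pointed simple-boundary quadrangulation is asymptotically the same for parameters
`(n, pₙ)` and for any `(n', p')` with `n'/n` and `p'/pₙ` close to `1`. -/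
theorem restriction_probability_comparison (α : ℝ) (hα : 0 < α) (p : ℕ → ℕ)
    (hppos : ∀ n, 0 < p n) (hpeven : ∀ n, Even (p n))
    (hp : Tendsto (fun n => (p n : ℝ) / (2 * α * Real.sqrt (2 * n))) atTop (𝓝 1))
    {η ε δ : ℝ} (hη : 0 < η) (hε : 0 < ε) (hε' : ε < 1/3) (hδ : 0 < δ) (hδ' : δ < ε) :
    ∃ n₀ : ℕ, ∃ ζ : ℝ, 0 < ζ ∧ ∀ n : ℕ, n₀ ≤ n →
      ∀ a pr pl pin n' p' : ℕ,
      0 < a → 0 < pr → 0 < pl → 0 < pin → 0 < n' → 0 < p' →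
      ⌊(1/3 - ε) * (p n : ℝ)⌋₊ ≤ pr → (pr : ℝ) ≤ (1/3 - δ) * (p n : ℝ) →
      (p n : ℝ) / 2 ≤ (pl : ℝ) → (pl : ℝ) ≤ (2/3 - δ) * (p n : ℝ) →
      (n : ℝ) / 2 ≤ (a : ℝ) → (a : ℝ) ≤ (1 - δ) * (n : ℝ) →
      1 ≤ pin → (pin : ℝ) ≤ Real.sqrt n / δ →
      |(n' : ℝ) / (n : ℝ) - 1| ≤ ζ → |(p' : ℝ) / (p n : ℝ) - 1| ≤ ζ →
      Even p' → Even (pr + pl + pin) →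
      (a + 1 ≤ n ∧ a + 1 ≤ n' ∧
        (pr + pl + pin) + 2 ≤ p n + 2 * pin ∧
        (pr + pl + pin) + 2 ≤ p' + 2 * pin ∧
        |(Qcount (n - a) ((p n + 2 * pin - (pr + pl + pin)) / 2)
              / (((n + p n / 2 + 1 : ℕ) : ℝ) * Qcount n (p n / 2)))
          * ((((n' + p' / 2 + 1 : ℕ) : ℝ) * Qcount n' (p' / 2))
              / Qcount (n' - a) ((p' + 2 * pin - (pr + pl + pin)) / 2))
          - 1| ≤ η) := by
  obtain ⟨θ, hθ, hθ1, hθη⟩ : ∃ θ : ℝ, 0 < θ ∧ 8 * θ ≤ 1 ∧ 8 * θ ≤ η :=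
    ⟨min 1 η / 8, by positivity, by linarith [min_le_left 1 η], by linarith [min_le_right 1 η]⟩
  obtain ⟨MB, ζB, hζB, HB⟩ := log_Qcount_compare (c₁ := α ^ 2 / 2) (c₂ := 8 * α ^ 2)
    (by positivity) hθ
  obtain ⟨MA, ζA, hζA, HA⟩ := log_Qcount_compare (c₁ := 2 * δ ^ 2 * α ^ 2)
    (c₂ := (16 * α ^ 2 + 1 / (2 * δ ^ 2)) / δ) (by positivity) hθ
  obtain ⟨ζ, hζ, zA, zB, zδ, zθ⟩ : ∃ ζ : ℝ, 0 < ζ ∧ ζ / δ ≤ ζA ∧ ζ ≤ ζB ∧ ζ ≤ δ / 2 ∧ ζ ≤ θ := by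
    refine ⟨min (min (ζA * δ) ζB) (min (δ / 2) θ), by positivity, ?_, ?_, ?_, ?_⟩
    · rw [div_le_iff₀ hδ]; exact (min_le_left _ _).trans (min_le_left _ _)
    · exact (min_le_left _ _).trans (min_le_right _ _)
    · exact (min_le_right _ _).trans (min_le_left _ _)
    · exact (min_le_right _ _).trans (min_le_right _ _)
  have hev : ∀ᶠ n : ℕ in atTop, 0 < n ∧ MB ≤ n ∧ (MA : ℝ) ≤ δ * n ∧
      2 * α ^ 2 * n ≤ (p n : ℝ) ^ 2 ∧ (p n : ℝ) ^ 2 ≤ 32 * α ^ 2 * n := by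
    have hbig : Tendsto (fun n : ℕ => δ * (n : ℝ)) atTop atTop :=
      tendsto_natCast_atTop_atTop.const_mul_atTop hδ
    filter_upwards [eventually_gt_atTop 0, eventually_ge_atTop MB, hbig.eventually_ge_atTop (MA:ℝ),
      perimeter_sq_bounds hα hp] with n h0 h1 h2 h3
    exact ⟨h0, h1, h2, h3⟩
  obtain ⟨n₀, hn₀⟩ := eventually_atTop.1 hev
  refine ⟨n₀, ζ, hζ, ?_⟩
  intro n hn a pr pl pin n' p' _ _ _ _ _ _ _ hpr _ hpl _ ha hpin1 hpin hn' hp' evp' evP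
  obtain ⟨hn0, hMB, hMA, hplo, hphi⟩ := hn₀ n hn
  have hnR : (0:ℝ) < n := by exact_mod_cast hn0
  have hpR : (0:ℝ) < p n := by exact_mod_cast hppos n
  have evp := hpeven n
  have hpin1R : (1:ℝ) ≤ pin := by exact_mod_cast hpin1
  have dn : |(n':ℝ) - n| ≤ ζ * n := by
    have e : (n':ℝ) - n = ((n':ℝ) / n - 1) * n := by field_simp
    rw [e, abs_mul, abs_of_pos hnR]
    exact mul_le_mul_of_nonneg_right hn' hnR.le
  have dp : |(p':ℝ) - p n| ≤ ζ * p n := by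
    have e : (p':ℝ) - p n = ((p':ℝ) / p n - 1) * p n := by field_simp
    rw [e, abs_mul, abs_of_pos hpR]
    exact mul_le_mul_of_nonneg_right hp' hpR.le
  have dn' := abs_le.1 dn
  have dp' := abs_le.1 dp
  have hδn : 0 < δ * n := by positivity
  have hδp : 0 < δ * p n := by positivity
  have hζn : ζ * n ≤ δ / 2 * n := mul_le_mul_of_nonneg_right zδ hnR.le
  have hζp : ζ * p n ≤ δ / 2 * p n := mul_le_mul_of_nonneg_right zδ hpR.le
  have c1 : a < n := by
    have : (a:ℝ) < n := by linarith
    exact_mod_cast this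
  have c2 : a < n' := by
    have : (a:ℝ) < n' := by linarith
    exact_mod_cast this
  have c3 : pr + pl + pin < p n + 2 * pin := by
    have : (pr:ℝ) + pl + pin < p n + 2 * pin := by linarith
    exact_mod_cast this
  have c4 : pr + pl + pin < p' + 2 * pin := by
    have : (pr:ℝ) + pl + pin < p' + 2 * pin := by linarith
    exact_mod_cast this
  obtain ⟨ℓ, hℓ⟩ := evp
  obtain ⟨ℓ', hℓ'⟩ := evp'
  obtain ⟨P, hP⟩ := evP
  -- the strict inequalities improve by parity
  refine ⟨c1, c2, by omega, by omega, ?_⟩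
  have i1 : p n / 2 = ℓ := by omega
  have i2 : p' / 2 = ℓ' := by omega
  obtain ⟨k, hk⟩ : ∃ k, (p n + 2 * pin - (pr + pl + pin)) / 2 = k := ⟨_, rfl⟩
  obtain ⟨k', hk'⟩ : ∃ k', (p' + 2 * pin - (pr + pl + pin)) / 2 = k' := ⟨_, rfl⟩
  obtain ⟨m, hm⟩ : ∃ m, n - a = m := ⟨_, rfl⟩
  obtain ⟨m', hm'⟩ : ∃ m', n' - a = m' := ⟨_, rfl⟩
  rw [i1, i2, hk, hk', hm, hm']
  have ek : (2:ℝ) * k + pr + pl = p n + pin := by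
    have : 2 * k + pr + pl = p n + pin := by omega
    exact_mod_cast this
  have ek' : (2:ℝ) * k' + pr + pl = p' + pin := by
    have : 2 * k' + pr + pl = p' + pin := by omega
    exact_mod_cast this
  have em : (m:ℝ) + a = n := by
    have : m + a = n := by omega
    exact_mod_cast this
  have em' : (m':ℝ) + a = n' := by
    have : m' + a = n' := by omega
    exact_mod_cast this
  have eℓ : (p n : ℝ) = 2 * ℓ := by rw [hℓ]; push_cast; ring
  have eℓ' : (p' : ℝ) = 2 * ℓ' := by rw [hℓ']; push_cast; ring
  have hmlo : δ * n ≤ m := by linarith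
  have hmhi : (m:ℝ) ≤ n := by linarith [Nat.cast_nonneg (α := ℝ) a]
  have hmR : (0:ℝ) < m := hδn.trans_le hmlo
  have hklo : δ * p n ≤ k := by linarith
  have hkR : (0:ℝ) < k := hδp.trans_le hklo
  have hpinsq : (pin:ℝ) ^ 2 ≤ n / δ ^ 2 := by
    calc (pin:ℝ) ^ 2 ≤ (√(n:ℝ) / δ) ^ 2 := pow_le_pow_left₀ (by positivity) hpin 2
      _ = n / δ ^ 2 := by rw [div_pow, Real.sq_sqrt hnR.le]
  -- comparison of the two restricted counts, where `n - a ≥ δ n` and the half-perimeter is `≥ δ pₙ`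
  have A0 : MA ≤ m := by
    have h : (MA:ℝ) ≤ m := hMA.trans hmlo
    exact_mod_cast h
  have A1 : 2 * δ ^ 2 * α ^ 2 * (m:ℝ) ≤ (k:ℝ) ^ 2 := by
    calc 2 * δ ^ 2 * α ^ 2 * (m:ℝ) ≤ 2 * δ ^ 2 * α ^ 2 * n := by gcongr
      _ = δ ^ 2 * (2 * α ^ 2 * n) := by ring
      _ ≤ δ ^ 2 * (p n : ℝ) ^ 2 := by gcongr
      _ = (δ * p n) ^ 2 := by ring
      _ ≤ (k:ℝ) ^ 2 := by gcongr
  have A2 : (k:ℝ) ^ 2 ≤ (16 * α ^ 2 + 1 / (2 * δ ^ 2)) / δ * m := by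
    have h1 : (k:ℝ) ≤ (p n + pin) / 2 := by
      linarith [Nat.cast_nonneg (α := ℝ) pr, Nat.cast_nonneg (α := ℝ) pl]
    calc (k:ℝ) ^ 2 ≤ ((p n + pin) / 2) ^ 2 := by gcongr
      _ ≤ ((p n : ℝ) ^ 2 + (pin:ℝ) ^ 2) / 2 := by linarith [sq_nonneg ((p n : ℝ) - pin)]
      _ ≤ (32 * α ^ 2 * n + n / δ ^ 2) / 2 := by linarith
      _ = (16 * α ^ 2 + 1 / (2 * δ ^ 2)) / δ * (δ * n) := by field_simp; ring
      _ ≤ _ := by gcongr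
  have A3 : |(m':ℝ) / m - 1| ≤ ζA := by
    have e : (m':ℝ) / m - 1 = ((n':ℝ) - n) / m := by
      rw [← em, ← em']; field_simp; ring
    rw [e, abs_div, abs_of_pos hmR]
    refine le_trans ?_ zA
    rw [div_le_div_iff₀ hmR hδ]
    calc |(n':ℝ) - n| * δ ≤ ζ * n * δ := by gcongr
      _ = ζ * (δ * n) := by ring
      _ ≤ ζ * m := by gcongr
  have A4 : |(k':ℝ) / k - 1| ≤ ζA := by
    have e : (k':ℝ) / k - 1 = ((p':ℝ) - p n) / 2 / k := by
      have : (p':ℝ) - p n = 2 * k' - 2 * k := by linarith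
      rw [this]; field_simp
    rw [e, abs_div, abs_of_pos hkR, abs_div, abs_of_pos (by norm_num : (0:ℝ) < 2)]
    refine le_trans ?_ zA
    rw [div_le_div_iff₀ hkR hδ]
    calc |(p':ℝ) - p n| / 2 * δ ≤ |(p':ℝ) - p n| * δ := by
          gcongr; linarith [abs_nonneg ((p':ℝ) - p n)]
      _ ≤ ζ * p n * δ := by gcongr
      _ = ζ * (δ * p n) := by ring
      _ ≤ ζ * k := by gcongr
  obtain ⟨qA, qA', dA⟩ := HA m k m' k' A0 A1 A2 A3 A4
  -- comparison of the two full counts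
  obtain ⟨qB, qB', dB⟩ := HB n ℓ n' ℓ' hMB
    (by rw [eℓ] at hplo; linarith) (by rw [eℓ] at hphi; linarith) (hn'.trans zB)
    (by
      have e : (ℓ':ℝ) / ℓ = (p':ℝ) / p n := by rw [eℓ, eℓ']; field_simp
      rw [e]; exact hp'.trans zB)
  have hN : ((n + ℓ + 1 : ℕ) : ℝ) = n + ℓ + 1 := by push_cast; ring
  have hN' : ((n' + ℓ' + 1 : ℕ) : ℝ) = n' + ℓ' + 1 := by push_cast; ring
  rw [hN, hN']
  have N0 : (0:ℝ) < n + ℓ + 1 := by positivity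
  have N0' : (0:ℝ) < n' + ℓ' + 1 := by positivity
  have dN : |Real.log ((n' : ℝ) + ℓ' + 1) - Real.log ((n : ℝ) + ℓ + 1)| ≤ 2 * ζ := by
    refine abs_log_sub_log_le N0 N0' hζ.le (by linarith) ?_
    rw [abs_le]
    have e : ζ * ((n:ℝ) + ℓ + 1) = ζ * n + ζ * p n / 2 + ζ := by rw [eℓ]; ring
    constructor <;> linarith
  set R := (Qcount m k / (((n:ℝ) + ℓ + 1) * Qcount n ℓ))
          * ((((n':ℝ) + ℓ' + 1) * Qcount n' ℓ') / Qcount m' k') with hR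
  have R0 : 0 < R := by positivity
  have hlog : |Real.log R| ≤ 4 * θ := by
    -- the exponential parts cancel, since `m - m' = n - n'` and `k - k' = ℓ - ℓ'`
    have e : Real.log R =
        (Real.log (Qcount m k) - Real.log (Qcount m' k')
          - ((m:ℝ) - m') * Real.log 12 - ((k:ℝ) - k') * Real.log (9 / 2))
        - (Real.log (Qcount n ℓ) - Real.log (Qcount n' ℓ')
          - ((n:ℝ) - n') * Real.log 12 - ((ℓ:ℝ) - ℓ') * Real.log (9 / 2))
        + (Real.log ((n' : ℝ) + ℓ' + 1) - Real.log ((n : ℝ) + ℓ + 1)) := by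
      have e1 : (m:ℝ) - m' = n - n' := by linarith
      have e2 : (k:ℝ) - k' = ℓ - ℓ' := by linarith
      rw [hR, Real.log_mul (by positivity) (by positivity), Real.log_div qA.ne' (by positivity),
        Real.log_div (by positivity) qA'.ne', Real.log_mul N0.ne' qB.ne',
        Real.log_mul N0'.ne' qB'.ne', e1, e2]
      ring
    rw [e]
    refine (abs_add_le _ _).trans ?_
    have := abs_sub (Real.log (Qcount m k) - Real.log (Qcount m' k')
          - ((m:ℝ) - m') * Real.log 12 - ((k:ℝ) - k') * Real.log (9 / 2))
        (Real.log (Qcount n ℓ) - Real.log (Qcount n' ℓ')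
          - ((n:ℝ) - n') * Real.log 12 - ((ℓ:ℝ) - ℓ') * Real.log (9 / 2))
    linarith
  have := Real.abs_exp_sub_one_le (x := Real.log R) (by linarith)
  rw [Real.exp_log R0] at this
  linarith
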